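/- Let d ≥ 1 and 1 ≤ q ≤ α ≤ p ≤ ∞. If f ∈ 𝓗(q,p,α) and g ∈ (L^q,ℓ^p)^α(ℝ^d), then the product fg belongs to L^1(ℝ^d) and |∫_{ℝ^d} f(x) g(x) dx| ≤ ∫_{ℝ^d} |f(x) g(x)| dx ≤ ‖f‖_{𝓗(q,p,α)} · ‖g‖_{q,p,α}. -/

import Mathlib

/-!
The pairing is first bounded on a single dilated atom `St^{(α')}_ρ h`. Cutting `ℝ^d` into the cubes
`I^ρ_k`, Hölder's inequality with exponents `q', q` on each cube and then with exponents `p', p` in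
the index `k` gives `∫ |St h · g| ≤ _ρ‖St h‖_{q',p'} · _ρ‖g‖_{q,p}`. A change of variables shows
`_ρ‖St h‖_{q',p'} = ρ^{d(1/α - 1/q)} ‖h‖_{q',p'}`, and this power of `ρ` is exactly the weight in the
Fofana norm of `g` (`lintegral_St_mul_le`).

For a general `f`, an 𝔥-decomposition dominates `f` pointwise: `|f| ≤ Σ |c_n| |St h_n|` almost
everywhere (`IsHDecomp.ae_le`). This follows from `|f| - Σ |c_n| |St h_n| ≤ |S_m - f|`, where `S_m`
is the `m`-th partial sum, because the right-hand side tends to `0` in `L^1` of every compact set.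
Integrating against `|g|` termwise gives `∫ |f g| ≤ (Σ |c_n|) ‖g‖_{q,p,α}`, and it remains to take
the infimum over all decompositions. Everything is done in `ℝ≥0∞`, so that integrability of `f g`
is a consequence of the bound.
-/

open MeasureTheory Filter Topology ENNReal

noncomputable section

/-- Dilation operator `St^{(α)}_ρ f (x) = ρ^{-d/α} f(x/ρ)` on functions on `ℝ^d`. -/
def St (d : ℕ) (α : ℝ≥0∞) (ρ : ℝ) (f : (Fin d → ℝ) → ℂ) : (Fin d → ℝ) → ℂ :=
  fun x => (ρ ^ (-(d : ℝ) * (1 / α).toReal) : ℝ) • f (ρ⁻¹ • x)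

/-- The cube `I^ρ_k = Π_j [k_j ρ, (k_j+1) ρ)`. -/
def cube (d : ℕ) (ρ : ℝ) (k : Fin d → ℤ) : Set (Fin d → ℝ) :=
  Set.univ.pi fun j => Set.Ico ((k j : ℝ) * ρ) (((k j : ℝ) + 1) * ρ)

/-- The amalgam norm `_ρ‖f‖_{q,p}`. -/
def amalgamNorm (d : ℕ) (q p : ℝ≥0∞) (ρ : ℝ) (f : (Fin d → ℝ) → ℂ) : ℝ≥0∞ :=
  if p = ∞ then ⨆ k : Fin d → ℤ, eLpNorm ((cube d ρ k).indicator f) q volume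
  else (∑' k : Fin d → ℤ,
      (eLpNorm ((cube d ρ k).indicator f) q volume) ^ p.toReal) ^ (1 / p.toReal)

/-- The Fofana norm `‖f‖_{q,p,α} = sup_{ρ>0} ρ^{d(1/α-1/q)} · _ρ‖f‖_{q,p}`. -/
def fofanaNorm (d : ℕ) (q p α : ℝ≥0∞) (f : (Fin d → ℝ) → ℂ) : ℝ≥0∞ :=
  ⨆ (ρ : ℝ) (_ : 0 < ρ),
    ENNReal.ofReal (ρ ^ ((d : ℝ) * ((1 / α).toReal - (1 / q).toReal))) *
      amalgamNorm d q p ρ f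

/-- `{(c n, ρ n, g n)}` is an 𝔥-decomposition of `f` (for the space `𝓗(q,p,α)`,
here parametrized by the conjugate exponents `q', p', α'`):
`Σ |c_n| < ∞`, each `g n` is in the unit ball of the amalgam space `(L^{q'}, ℓ^{p'})`,
and `f = Σ_n c_n St^{(α')}_{ρ_n} g_n` in the sense of `L^1_loc`. -/
structure IsHDecomp (d : ℕ) (q' p' α' : ℝ≥0∞) (f : (Fin d → ℝ) → ℂ)
    (c : ℕ → ℂ) (ρ : ℕ → ℝ) (g : ℕ → (Fin d → ℝ) → ℂ) : Prop where
  summable : Summable fun n => ‖c n‖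
  rho_pos : ∀ n, 0 < ρ n
  loc_int : ∀ n, LocallyIntegrable (g n) volume
  norm_le : ∀ n, amalgamNorm d q' p' 1 (g n) ≤ 1
  f_loc_int : LocallyIntegrable f volume
  tendsto : ∀ K : Set (Fin d → ℝ), IsCompact K →
    Tendsto (fun m => ∫ x in K, ‖(∑ n ∈ Finset.range m, c n • St d α' (ρ n) (g n)) x - f x‖)
      atTop (𝓝 0)

/-- Membership in the space `𝓗(q,p,α)` (parametrized by conjugate exponents). -/
def MemH (d : ℕ) (q' p' α' : ℝ≥0∞) (f : (Fin d → ℝ) → ℂ) : Prop :=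
  ∃ c ρ g, IsHDecomp d q' p' α' f c ρ g

/-- The norm of `𝓗(q,p,α)`:  `inf Σ|c_n|` over all 𝔥-decompositions. -/
def HNorm (d : ℕ) (q' p' α' : ℝ≥0∞) (f : (Fin d → ℝ) → ℂ) : ℝ≥0∞ :=
  sInf {s | ∃ c ρ g, IsHDecomp d q' p' α' f c ρ g ∧ s = ∑' n, ENNReal.ofReal ‖c n‖}

end

/-! ### Hölder's inequality for series -/

/-- Hölder's inequality for series in `ℝ≥0∞`, including the endpoint exponents `1` and `∞`; the two
factors on the right are in the shape used by `amalgamNorm`. -/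
lemma tsum_mul_le_of_conj {ι : Type*} [Countable ι] {p p' : ℝ≥0∞} (hpp' : 1 / p + 1 / p' = 1)
    (a b : ι → ℝ≥0∞) :
    ∑' k, a k * b k ≤
      (if p' = ∞ then ⨆ k, a k else (∑' k, a k ^ p'.toReal) ^ (1 / p'.toReal)) *
      (if p = ∞ then ⨆ k, b k else (∑' k, b k ^ p.toReal) ^ (1 / p.toReal)) := by
  have hc : ENNReal.HolderConjugate p p' :=
    ENNReal.holderConjugate_iff.2 (by simpa [one_div] using hpp')
  by_cases hp : p = ∞
  · have hp' : p' = 1 := (HolderConjugate.eq_top_iff_eq_one p p').1 hp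
    subst hp hp'
    simp only [one_ne_top, if_false, if_true, toReal_one, rpow_one, div_one]
    rw [← ENNReal.tsum_mul_right]
    exact ENNReal.tsum_le_tsum fun k => mul_le_mul_right (le_iSup b k) _
  by_cases hp' : p' = ∞
  · have hp1 : p = 1 := (HolderConjugate.eq_top_iff_eq_one p' p).1 hp'
    subst hp1 hp'
    simp only [one_ne_top, if_false, if_true, toReal_one, rpow_one, div_one]
    rw [← ENNReal.tsum_mul_left]
    exact ENNReal.tsum_le_tsum fun k => mul_le_mul_left (le_iSup a k) _
  · rw [if_neg hp, if_neg hp']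
    have h := (HolderConjugate.toReal_of_ne_top (p := p) (q := p') hp hp').symm
    rw [ENNReal.tsum_eq_iSup_sum]
    refine iSup_le fun s => (ENNReal.inner_le_Lp_mul_Lq s a b h).trans ?_
    have := h.nonneg
    have := h.symm.nonneg
    gcongr
    · exact ENNReal.sum_le_tsum s
    · exact ENNReal.sum_le_tsum s

/-! ### Cubes and dilations -/

lemma measurableSet_cube (d : ℕ) (ρ : ℝ) (k : Fin d → ℤ) : MeasurableSet (cube d ρ k) :=
  MeasurableSet.univ_pi fun _ => measurableSet_Ico

lemma iUnion_cube (d : ℕ) {ρ : ℝ} (hρ : 0 < ρ) : ⋃ k, cube d ρ k = Set.univ := by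
  refine Set.eq_univ_of_forall fun x => Set.mem_iUnion.2 ⟨fun j => ⌊x j / ρ⌋, ?_⟩
  intro j _
  exact ⟨(le_div_iff₀ hρ).1 (Int.floor_le _), (div_lt_iff₀ hρ).1 (Int.lt_floor_add_one _)⟩

lemma smul_mem_cube_iff (d : ℕ) {ρ : ℝ} (hρ : 0 < ρ) (k : Fin d → ℤ) (x : Fin d → ℝ) :
    ρ⁻¹ • x ∈ cube d 1 k ↔ x ∈ cube d ρ k := by
  simp only [cube, Set.mem_univ_pi, Set.mem_Ico, Pi.smul_apply, smul_eq_mul, mul_one]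
  refine forall_congr' fun j => ?_
  rw [inv_mul_eq_div, le_div_iff₀ hρ, div_lt_iff₀ hρ]

lemma toReal_one_div_conj {q q' : ℝ≥0∞} (h : 1 / q + 1 / q' = 1) :
    (1 / q').toReal = 1 - (1 / q).toReal := by
  have h1 : 1 / q ≠ ∞ := fun h0 => by simp [h0] at h
  have h2 : 1 / q' ≠ ∞ := fun h0 => by simp [h0] at h
  have := congrArg ENNReal.toReal h
  rw [ENNReal.toReal_add h1 h2, toReal_one] at this
  linarith

/-- The scaling identity: by the change of variables `x ↦ x/ρ`, the `L^{q'}` norm of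
`St^{(α')}_ρ h` on `I^ρ_k` is that of `h` on `I^1_k`, times `ρ^{-d/α' + d/q'} = ρ^{d(1/α - 1/q)}`. -/
lemma eLpNorm_cube_St (d : ℕ) {q α q' α' : ℝ≥0∞}
    (hqq' : 1 / q + 1 / q' = 1) (hαα' : 1 / α + 1 / α' = 1) {ρ : ℝ} (hρ : 0 < ρ)
    (h : (Fin d → ℝ) → ℂ) (k : Fin d → ℤ) :
    eLpNorm ((cube d ρ k).indicator (St d α' ρ h)) q' volume =
      ENNReal.ofReal (ρ ^ ((d : ℝ) * ((1 / α).toReal - (1 / q).toReal))) *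
        eLpNorm ((cube d 1 k).indicator h) q' volume := by
  have hρ' : ρ⁻¹ ≠ 0 := inv_ne_zero hρ.ne'
  have e : (cube d ρ k).indicator (St d α' ρ h) =
      (ρ ^ (-(d : ℝ) * (1 / α').toReal) : ℝ) •
        ((cube d 1 k).indicator h ∘ fun x => ρ⁻¹ • x) := by
    ext x
    by_cases hx : x ∈ cube d ρ k
    · simp [hx, (smul_mem_cube_iff d hρ k x).2 hx, St]
    · simp [hx, mt (smul_mem_cube_iff d hρ k x).1 hx]
  have emb : MeasurableEmbedding (fun x : Fin d → ℝ => ρ⁻¹ • x) :=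
    (Homeomorph.smulOfNeZero ρ⁻¹ hρ').measurableEmbedding
  have hpos : 0 < |((ρ⁻¹) ^ d)⁻¹| := abs_pos.2 (inv_ne_zero (pow_ne_zero _ hρ'))
  rw [e, eLpNorm_const_smul, ← emb.eLpNorm_map_measure, Measure.map_addHaar_smul _ hρ',
    Module.finrank_fin_fun, eLpNorm_smul_measure_of_ne_zero (ENNReal.ofReal_pos.2 hpos).ne',
    smul_eq_mul, ← mul_assoc]
  congr 1
  rw [Real.enorm_eq_ofReal (by positivity), ENNReal.ofReal_rpow_of_pos hpos,
    ← ENNReal.ofReal_mul (by positivity)]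
  congr 1
  have : |((ρ⁻¹) ^ d)⁻¹| = ρ ^ (d : ℝ) := by
    rw [inv_pow, inv_inv, abs_of_pos (by positivity), Real.rpow_natCast]
  rw [this, ← Real.rpow_mul hρ.le, ← Real.rpow_add hρ, toReal_one_div_conj hqq',
    toReal_one_div_conj hαα']
  congr 1
  ring

lemma integrableOn_St (d : ℕ) (α' : ℝ≥0∞) {ρ : ℝ} (hρ : 0 < ρ) {h : (Fin d → ℝ) → ℂ}
    (hh : LocallyIntegrable h volume) {K : Set (Fin d → ℝ)} (hK : IsCompact K) :
    IntegrableOn (St d α' ρ h) K volume := by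
  have hρ' : ρ⁻¹ ≠ 0 := inv_ne_zero hρ.ne'
  have hK' : IsCompact ((fun x => ρ⁻¹ • x) '' K) := hK.image (continuous_const_smul _)
  have h1 := ((integrable_indicator_iff hK'.measurableSet).2
    (hh.integrableOn_isCompact hK')).comp_smul hρ'
  have h2 : IntegrableOn (fun x => h (ρ⁻¹ • x)) K volume := by
    rw [← integrable_indicator_iff hK.measurableSet]
    refine h1.congr (Filter.Eventually.of_forall fun x => Eq.symm ?_)
    beta_reduce
    by_cases hx : x ∈ K
    · rw [Set.indicator_of_mem hx, Set.indicator_of_mem (Set.mem_image_of_mem _ hx)]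
    · rw [Set.indicator_of_notMem hx, Set.indicator_of_notMem]
      rintro ⟨y, hy, hyx⟩
      exact hx (smul_right_injective _ hρ' hyx ▸ hy)
  exact Integrable.smul (ρ ^ (-(d : ℝ) * (1 / α').toReal) : ℝ) h2

lemma locallyIntegrable_St (d : ℕ) (α' : ℝ≥0∞) {ρ : ℝ} (hρ : 0 < ρ) {h : (Fin d → ℝ) → ℂ}
    (hh : LocallyIntegrable h volume) : LocallyIntegrable (St d α' ρ h) volume :=
  locallyIntegrable_iff.2 fun _ hK => integrableOn_St d α' hρ hh hK

/-! ### Pairing with one atom -/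

/-- The pairing of `g` with a single dilated atom. -/
lemma lintegral_St_mul_le (d : ℕ) {q p α q' p' α' : ℝ≥0∞}
    (hqq' : 1 / q + 1 / q' = 1) (hpp' : 1 / p + 1 / p' = 1) (hαα' : 1 / α + 1 / α' = 1)
    {ρ : ℝ} (hρ : 0 < ρ) {h g : (Fin d → ℝ) → ℂ}
    (hh : LocallyIntegrable h volume) (hg : LocallyIntegrable g volume) :
    ∫⁻ x, ‖St d α' ρ h x‖ₑ * ‖g x‖ₑ ≤ amalgamNorm d q' p' 1 h * fofanaNorm d q p α g := by
  have hc : ENNReal.HolderConjugate q' q :=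
    ENNReal.holderConjugate_iff.2 (by simpa [one_div, add_comm] using hqq')
  set w := ENNReal.ofReal (ρ ^ ((d : ℝ) * ((1 / α).toReal - (1 / q).toReal))) with hw
  have hcube : ∀ k, ∫⁻ x in cube d ρ k, ‖St d α' ρ h x‖ₑ * ‖g x‖ₑ ≤
      w * (eLpNorm ((cube d 1 k).indicator h) q' volume *
        eLpNorm ((cube d ρ k).indicator g) q volume) := by
    intro k
    have hm := measurableSet_cube d ρ k
    have := eLpNorm_smul_le_mul_eLpNorm (μ := volume) (p := q') (q := q) (r := 1)
      (hg.aestronglyMeasurable.indicator hm)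
      ((locallyIntegrable_St d α' hρ hh).aestronglyMeasurable.indicator hm)
    rw [eLpNorm_cube_St d hqq' hαα' hρ, mul_assoc] at this
    refine le_trans (le_of_eq ?_) this
    rw [eLpNorm_one_eq_lintegral_enorm, ← lintegral_indicator hm]
    refine lintegral_congr fun x => ?_
    by_cases hx : x ∈ cube d ρ k <;> simp [hx, enorm_mul]
  calc ∫⁻ x, ‖St d α' ρ h x‖ₑ * ‖g x‖ₑ
      = ∫⁻ x in ⋃ k, cube d ρ k, ‖St d α' ρ h x‖ₑ * ‖g x‖ₑ := by
        rw [iUnion_cube d hρ, Measure.restrict_univ]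
    _ ≤ ∑' k, ∫⁻ x in cube d ρ k, ‖St d α' ρ h x‖ₑ * ‖g x‖ₑ := lintegral_iUnion_le _ _
    _ ≤ ∑' k, w * (eLpNorm ((cube d 1 k).indicator h) q' volume *
        eLpNorm ((cube d ρ k).indicator g) q volume) := ENNReal.tsum_le_tsum hcube
    _ ≤ w * (amalgamNorm d q' p' 1 h * amalgamNorm d q p ρ g) := by
        rw [ENNReal.tsum_mul_left]
        exact mul_le_mul_right (tsum_mul_le_of_conj hpp' _ _) _
    _ = amalgamNorm d q' p' 1 h * (w * amalgamNorm d q p ρ g) := by ring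
    _ ≤ amalgamNorm d q' p' 1 h * fofanaNorm d q p α g :=
        mul_le_mul_right (le_iSup₂ (f := fun (ρ : ℝ) (_ : 0 < ρ) =>
          ENNReal.ofReal (ρ ^ ((d : ℝ) * ((1 / α).toReal - (1 / q).toReal))) *
            amalgamNorm d q p ρ g) ρ hρ) _

/-! ### Pairing with an 𝔥-decomposition -/

/-- A function is dominated almost everywhere by the sum of the moduli of the terms of any of its
𝔥-decompositions. -/
lemma IsHDecomp.ae_le {d : ℕ} {q' p' α' : ℝ≥0∞} {f : (Fin d → ℝ) → ℂ} {c : ℕ → ℂ} {ρ : ℕ → ℝ}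
    {h : ℕ → (Fin d → ℝ) → ℂ} (H : IsHDecomp d q' p' α' f c ρ h) :
    ∀ᵐ x, ‖f x‖ₑ ≤ ∑' n, ‖c n‖ₑ * ‖St d α' (ρ n) (h n) x‖ₑ := by
  set F : (Fin d → ℝ) → ℝ≥0∞ := fun x => ∑' n, ‖c n‖ₑ * ‖St d α' (ρ n) (h n) x‖ₑ with hF
  have hFm : AEMeasurable F volume := AEMeasurable.tsum fun n =>
    (locallyIntegrable_St d α' (H.rho_pos n) (H.loc_int n)).aestronglyMeasurable.enorm.const_mul _
  have hball : ∀ N : ℕ, ∀ᵐ x ∂(volume.restrict (Metric.closedBall (0 : Fin d → ℝ) N)),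
      ‖f x‖ₑ ≤ F x := by
    intro N
    set K := Metric.closedBall (0 : Fin d → ℝ) N
    have hK : IsCompact K := isCompact_closedBall _ _
    have hint : ∀ m, Integrable (fun x =>
        (∑ n ∈ Finset.range m, c n • St d α' (ρ n) (h n)) x - f x) (volume.restrict K) := by
      intro m
      refine Integrable.sub ?_ (H.f_loc_int.integrableOn_isCompact hK)
      exact integrable_finsetSum' _ fun n _ =>
        (integrableOn_St d α' (H.rho_pos n) (H.loc_int n) hK).smul (c n)
    have hle : ∀ m, ∫⁻ x in K, (‖f x‖ₑ - F x) ≤ ENNReal.ofReal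
        (∫ x in K, ‖(∑ n ∈ Finset.range m, c n • St d α' (ρ n) (h n)) x - f x‖) := by
      intro m
      rw [ofReal_integral_norm_eq_lintegral_enorm (hint m)]
      refine lintegral_mono fun x => tsub_le_iff_right.2 ?_
      set S := (∑ n ∈ Finset.range m, c n • St d α' (ρ n) (h n)) x with hS
      have hSF : ‖S‖ₑ ≤ F x := by
        rw [hS, Finset.sum_apply]
        refine (enorm_sum_le _ _).trans (le_trans (le_of_eq ?_) (ENNReal.sum_le_tsum (Finset.range m)))
        exact Finset.sum_congr rfl fun n _ => by simp [enorm_mul]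
      calc ‖f x‖ₑ = ‖S - (S - f x)‖ₑ := by rw [_root_.sub_sub_cancel]
        _ ≤ ‖S‖ₑ + ‖S - f x‖ₑ := enorm_sub_le
        _ ≤ ‖S - f x‖ₑ + F x := by rw [add_comm]; gcongr
    have hlim := ENNReal.tendsto_ofReal (H.tendsto K hK)
    rw [ENNReal.ofReal_zero] at hlim
    have h0 : ∫⁻ x in K, (‖f x‖ₑ - F x) = 0 := le_antisymm (ge_of_tendsto' hlim hle) zero_le
    have hae := (lintegral_eq_zero_iff'
      (H.f_loc_int.aestronglyMeasurable.enorm.sub hFm).restrict).1 h0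
    filter_upwards [hae] with x hx using tsub_eq_zero_iff_le.1 hx
  have := (ae_restrict_iUnion_iff (μ := volume)
    (fun N : ℕ => Metric.closedBall (0 : Fin d → ℝ) N) (fun x => ‖f x‖ₑ ≤ F x)).2 hball
  rwa [Metric.iUnion_closedBall_nat, Measure.restrict_univ] at this

lemma IsHDecomp.lintegral_mul_le {d : ℕ} {q p α q' p' α' : ℝ≥0∞}
    (hqq' : 1 / q + 1 / q' = 1) (hpp' : 1 / p + 1 / p' = 1) (hαα' : 1 / α + 1 / α' = 1)
    {f g : (Fin d → ℝ) → ℂ} {c : ℕ → ℂ} {ρ : ℕ → ℝ} {h : ℕ → (Fin d → ℝ) → ℂ}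
    (H : IsHDecomp d q' p' α' f c ρ h) (hg : LocallyIntegrable g volume) :
    ∫⁻ x, ‖f x * g x‖ₑ ≤ (∑' n, ENNReal.ofReal ‖c n‖) * fofanaNorm d q p α g := by
  have hm : ∀ n, AEMeasurable (fun x => ‖St d α' (ρ n) (h n) x‖ₑ * ‖g x‖ₑ) volume := fun n =>
    (locallyIntegrable_St d α' (H.rho_pos n) (H.loc_int n)).aestronglyMeasurable.enorm.mul
      hg.aestronglyMeasurable.enorm
  calc ∫⁻ x, ‖f x * g x‖ₑ
      ≤ ∫⁻ x, ∑' n, ‖c n‖ₑ * (‖St d α' (ρ n) (h n) x‖ₑ * ‖g x‖ₑ) := by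
        refine lintegral_mono_ae ?_
        filter_upwards [H.ae_le] with x hx
        simp_rw [← mul_assoc]
        rw [enorm_mul, ENNReal.tsum_mul_right]
        gcongr
    _ = ∑' n, ‖c n‖ₑ * ∫⁻ x, ‖St d α' (ρ n) (h n) x‖ₑ * ‖g x‖ₑ := by
        rw [lintegral_tsum fun n => (hm n).const_mul _]
        exact tsum_congr fun n => lintegral_const_mul'' _ (hm n)
    _ ≤ ∑' n, ENNReal.ofReal ‖c n‖ * fofanaNorm d q p α g := by
        refine ENNReal.tsum_le_tsum fun n => ?_
        rw [ofReal_norm]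
        refine mul_le_mul_right ((lintegral_St_mul_le d hqq' hpp' hαα' (H.rho_pos n)
          (H.loc_int n) hg).trans ?_) _
        exact (mul_le_mul_left (H.norm_le n) _).trans_eq (one_mul _)
    _ = _ := ENNReal.tsum_mul_right

/-- For `f ∈ 𝓗(q,p,α)` and `g ∈ (L^q,ℓ^p)^α(ℝ^d)` the product `fg` is in `L^1(ℝ^d)` and
`|∫ fg| ≤ ∫ |fg| ≤ ‖f‖_{𝓗(q,p,α)} ‖g‖_{q,p,α}`. -/
theorem H_fofana_pairing
    (d : ℕ) (hd : 1 ≤ d) (q p α q' p' α' : ℝ≥0∞)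
    (hq : 1 ≤ q) (hqα : q ≤ α) (hαp : α ≤ p)
    (hqq' : 1 / q + 1 / q' = 1) (hpp' : 1 / p + 1 / p' = 1) (hαα' : 1 / α + 1 / α' = 1)
    (f g : (Fin d → ℝ) → ℂ) (hf : MemH d q' p' α' f)
    (hg : LocallyIntegrable g volume) (hgfin : fofanaNorm d q p α g ≠ ∞) :
    Integrable (fun x => f x * g x) volume ∧
      ENNReal.ofReal ‖∫ x, f x * g x‖ ≤ HNorm d q' p' α' f * fofanaNorm d q p α g ∧
      (∫⁻ x, ENNReal.ofReal ‖f x * g x‖) ≤ HNorm d q' p' α' f * fofanaNorm d q p α g := by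
  have hbound : ∀ c ρ h, IsHDecomp d q' p' α' f c ρ h → ∫⁻ x, ‖f x * g x‖ₑ ≤
      (∑' n, ENNReal.ofReal ‖c n‖) * fofanaNorm d q p α g :=
    fun c ρ h H => H.lintegral_mul_le hqq' hpp' hαα' hg
  obtain ⟨c, ρ, h, H⟩ := hf
  have hcfin : ∑' n, ENNReal.ofReal ‖c n‖ ≠ ∞ := H.summable.tsum_ofReal_ne_top
  have hfin : ∫⁻ x, ‖f x * g x‖ₑ < ∞ :=
    (hbound c ρ h H).trans_lt (ENNReal.mul_lt_top hcfin.lt_top hgfin.lt_top)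
  have hmain : ∫⁻ x, ‖f x * g x‖ₑ ≤ HNorm d q' p' α' f * fofanaNorm d q p α g := by
    by_cases h0 : fofanaNorm d q p α g = 0
    · have := hbound c ρ h H
      rw [h0, mul_zero] at this ⊢
      exact this
    · rw [← ENNReal.div_le_iff h0 hgfin]
      refine le_sInf ?_
      rintro s ⟨c', ρ', h', H', rfl⟩
      rw [ENNReal.div_le_iff h0 hgfin]
      exact hbound c' ρ' h' H'
  refine ⟨⟨H.f_loc_int.aestronglyMeasurable.mul hg.aestronglyMeasurable, hfin⟩, ?_, ?_⟩
  · rw [ofReal_norm]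
    exact (enorm_integral_le_lintegral_enorm _).trans hmain
  · simpa only [ofReal_norm] using hmain
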